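/- arXiv:2311.02811 — 2 statements merged into one kernel-verified Lean document; each statement's English description precedes it below -/
import Mathlib

section
/- Correctness of the early convergence check: if at some iteration k one has L_k(u) = L_k(v) for every edge {u, v} of G, then for every vertex v, L_k(v) equals the minimum vertex of the connected component of v. -/
variable {V : Type*} [Fintype V] [LinearOrder V] [Nonempty V]

/-- One-step two-order Contour update `U`: `U(L)(w)` is the minimum of the finite
nonempty set `{L(L(w))} ∪ {L(L(v)) : v adjacent to w} ∪
{L(L(v)) : v adjacent to some u with L(u) = w}`. -/
def contourStep (G : SimpleGraph V) [DecidableRel G.Adj] (L : V → V) : V → V :=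
  fun w =>
    (insert (L (L w))
      ((G.neighborFinset w).image (fun v => L (L v)) ∪
        (Finset.univ.filter (fun v => ∃ u, G.Adj v u ∧ L u = w)).image
          (fun v => L (L v)))).min' (Finset.insert_nonempty _ _)

/-- Synchronous two-order Contour labeling sequence: `L_0 = id`, `L_{k+1} = U(L_k)`. -/
def contourSeq (G : SimpleGraph V) [DecidableRel G.Adj] : ℕ → V → V
  | 0 => id
  | (k + 1) => contourStep G (contourSeq G k)

/-- The minimum vertex of the connected component of `v`. -/
noncomputable def compMin (G : SimpleGraph V) (v : V) : V :=
  haveI : DecidablePred (G.Reachable v) := Classical.decPred _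
  (Finset.univ.filter (G.Reachable v)).min'
    ⟨v, Finset.mem_filter.mpr ⟨Finset.mem_univ v, SimpleGraph.Reachable.refl v⟩⟩

/-! Composing labels and passing to neighbours never leaves a component, and the candidate `L (L w)`
keeps the update below `w`, so every `L_k` satisfies `L_k w ≤ w` and `L_k w` lies in the component
of `w`. If such a labeling `L` is constant along edges, then it is constant on components, so
`L v = L w ≤ w` for every `w` in the component of `v`, to which `L v` itself belongs. -/

section Labeling

variable {α : Type*} {G : SimpleGraph α} {L M : α → α}

/-- A labeling sending every vertex to a vertex of its own component that is not larger. This is the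
invariant of the Contour iteration; the label need not be the component minimum. -/
structure IsDescendingLabeling [LE α] (G : SimpleGraph α) (L : α → α) : Prop where
  le (v : α) : L v ≤ v
  reachable (v : α) : G.Reachable v (L v)

namespace IsDescendingLabeling

protected theorem id [Preorder α] (G : SimpleGraph α) :
    IsDescendingLabeling G id where
  le := le_refl
  reachable := SimpleGraph.Reachable.refl

protected theorem comp [Preorder α] (hL : IsDescendingLabeling G L)
    (hM : IsDescendingLabeling G M) : IsDescendingLabeling G (L ∘ M) where
  le v := (hL.le (M v)).trans (hM.le v)
  reachable v := (hM.reachable v).trans (hL.reachable (M v))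

end IsDescendingLabeling

theorem eq_of_reachable_of_forall_adj {β : Type*} {f : α → β}
    (hf : ∀ u v, G.Adj u v → f u = f v) {u v : α} (huv : G.Reachable u v) : f u = f v := by
  obtain ⟨p⟩ := huv
  induction p with
  | nil => rfl
  | cons hadj _ ih => exact (hf _ _ hadj).trans ih

theorem IsDescendingLabeling.isLeast_reachable [LE α] (hL : IsDescendingLabeling G L)
    (hadj : ∀ u v, G.Adj u v → L u = L v) (v : α) : IsLeast {w | G.Reachable v w} (L v) where
  left := hL.reachable v
  right w hvw := (eq_of_reachable_of_forall_adj hadj hvw).trans_le (hL.le w)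

end Labeling

section Contour

omit [Nonempty V]

theorem isLeast_compMin (G : SimpleGraph V) (v : V) :
    IsLeast {w | G.Reachable v w} (compMin G v) := by
  have hmin : IsLeast _ (compMin G v) := Finset.isLeast_min' _ _
  simpa only [Finset.coe_filter_univ] using hmin

variable (G : SimpleGraph V) [DecidableRel G.Adj]

theorem contourStep_le_apply_apply (L : V → V) (w : V) : contourStep G L w ≤ L (L w) :=
  Finset.min'_le _ _ (Finset.mem_insert_self _ _)

theorem contourStep_eq_or (L : V → V) (w : V) :
    contourStep G L w = L (L w) ∨ (∃ v, G.Adj w v ∧ contourStep G L w = L (L v)) ∨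
      ∃ v, (∃ u, G.Adj v u ∧ L u = w) ∧ contourStep G L w = L (L v) := by
  have hmem : contourStep G L w ∈ _ := Finset.min'_mem _ _
  simpa [eq_comm (b := contourStep G L w)] using hmem

variable {G} in
protected theorem IsDescendingLabeling.contourStep {L : V → V} (hL : IsDescendingLabeling G L) :
    IsDescendingLabeling G (contourStep G L) where
  le v := (contourStep_le_apply_apply G L v).trans ((hL.comp hL).le v)
  reachable w := by
    have hLL : ∀ v, G.Reachable v (L (L v)) := (hL.comp hL).reachable
    obtain heq | ⟨v, hwv, heq⟩ | ⟨v, ⟨u, hvu, rfl⟩, heq⟩ := contourStep_eq_or G L w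
    · exact heq ▸ hLL w
    · exact heq ▸ hwv.reachable.trans (hLL v)
    · exact heq ▸ (hL.reachable u).symm.trans (hvu.symm.reachable.trans (hLL v))

theorem isDescendingLabeling_contourSeq (k : ℕ) : IsDescendingLabeling G (contourSeq G k) := by
  induction k with
  | zero => exact .id G
  | succ k ih => exact ih.contourStep

end Contour

/-- Correctness of the early convergence check: if at some iteration `k` one has
`L_k(u) = L_k(v)` for every edge `{u, v}` of `G`, then `L_k(v)` equals the minimum
vertex of the connected component of `v` for every vertex `v`. -/
theorem contour_early_convergence (G : SimpleGraph V) [DecidableRel G.Adj] (k : ℕ)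
    (h : ∀ u v : V, G.Adj u v → contourSeq G k u = contourSeq G k v) :
    ∀ v : V, contourSeq G k v = compMin G v := by
  intro v
  have hleast : IsLeast {w | G.Reachable v w} (contourSeq G k v) :=
    (isDescendingLabeling_contourSeq G k).isLeast_reachable h v
  exact hleast.unique (isLeast_compMin G v)
end

section
/- The two-order Contour operator dominates one-order label propagation: for every natural number k and every vertex v, L_k(v) ≤ M_k(v). -/
variable {V : Type*} [Fintype V] [LinearOrder V] [Nonempty V]

/-- One-order label-propagation step: `v ↦ min ({M v} ∪ {M u : u adjacent to v})`. -/
def propStep (G : SimpleGraph V) [DecidableRel G.Adj] (M : V → V) : V → V :=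
  fun v => (insert (M v) ((G.neighborFinset v).image M)).min' (Finset.insert_nonempty _ _)

/-- One-order label-propagation sequence: `M_0 = id`, `M_{k+1}(v) = min {M_k(u) : u = v or u adjacent to v}`. -/
def propSeq (G : SimpleGraph V) [DecidableRel G.Adj] : ℕ → V → V
  | 0 => id
  | (k + 1) => propStep G (propSeq G k)

section

omit [Nonempty V]

variable (G : SimpleGraph V) [DecidableRel G.Adj]

theorem le_propStep_iff {M : V → V} {a v : V} :
    a ≤ propStep G M v ↔ a ≤ M v ∧ ∀ u, G.Adj v u → a ≤ M u := by
  simp [propStep, Finset.le_min'_iff]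

theorem propStep_le (M : V → V) : propStep G M ≤ M :=
  fun _ => ((le_propStep_iff G).1 le_rfl).1

theorem propStep_monotone : Monotone (propStep G) := by
  intro M N hMN v
  obtain ⟨h_self, h_adj⟩ := (le_propStep_iff G).1 (le_refl (propStep G M v))
  exact (le_propStep_iff G).2
    ⟨h_self.trans (hMN v), fun u hu => (h_adj u hu).trans (hMN u)⟩

theorem contourStep_le_propStep_comp (L : V → V) : contourStep G L ≤ propStep G (L ∘ L) :=
  fun _ => Finset.min'_subset _ (Finset.insert_subset_insert _ Finset.subset_union_left)

theorem contourStep_le_comp (L : V → V) : contourStep G L ≤ L ∘ L :=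
  (contourStep_le_propStep_comp G L).trans (propStep_le G (L ∘ L))

theorem contourSeq_le_id (k : ℕ) : contourSeq G k ≤ id := by
  induction k with
  | zero => exact le_rfl
  | succ k ih =>
    calc contourSeq G (k + 1) ≤ contourSeq G k ∘ contourSeq G k := contourStep_le_comp G _
      _ ≤ contourSeq G k := fun v => ih (contourSeq G k v)
      _ ≤ id := ih

end

/-- The two-order Contour operator dominates one-order label propagation:
`L_k(v) ≤ M_k(v)` for every `k` and `v`. -/
theorem contour_le_prop (G : SimpleGraph V) [DecidableRel G.Adj] :
    ∀ (k : ℕ) (v : V), contourSeq G k v ≤ propSeq G k v := by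
  intro k
  change contourSeq G k ≤ propSeq G k
  induction k with
  | zero => exact le_rfl
  | succ k ih =>
    have h_comp : contourSeq G k ∘ contourSeq G k ≤ propSeq G k :=
      fun v => (contourSeq_le_id G k (contourSeq G k v)).trans (ih v)
    calc contourSeq G (k + 1)
      _ ≤ propStep G (contourSeq G k ∘ contourSeq G k) := contourStep_le_propStep_comp G _
      _ ≤ propSeq G (k + 1) := propStep_monotone G h_comp
end
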